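/- Let U ⊆ ℝ² be open, let u : ℝ² → ℝ be real-analytic on U, let z₀ ∈ U satisfy ∇u(z₀) = 0, and let σ > 0 be such that the closed ball of radius σ around z₀ is contained in U. Let K ⊆ ℝ² be an open set with u(z) ≥ u(z₀) for all z ∈ K, and let γ₁, γ₂ : [0,∞) → ℝ² be differentiable curves with γᵢ′(t) = −∇u(γᵢ(t)) for all t ≥ 0 and γᵢ(t) → z₀ as t → +∞ (i = 1,2), such that the ranges of γ₁ and γ₂ are contained in the frontier of K and the intersection of the frontier of K with the open ball of radius σ around z₀ is contained in (range γ₁) ∪ (range γ₂) ∪ {z₀}. Then for every ε ∈ (0,σ] there exists δ > 0 such that: for every z in the intersection of K with the open ball of radius δ around z₀, every T ∈ (0,∞], and every differentiable γ : [0,T) → ℝ² with γ(0) = z and γ′(t) = −∇u(γ(t)) for all t ∈ [0,T), one has γ(t) ∈ K and ‖γ(t) − z₀‖ < ε for all t ∈ [0,T); moreover, if T = ∞, then γ(t) converges as t → +∞ to a point of closure(K) with distance at most ε from z₀. -/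

import Mathlib

open Metric Set Filter Topology MeasureTheory

noncomputable section

abbrev E2 := EuclideanSpace ℝ (Fin 2)

/-!
A gradient-descent trajectory that starts in `K` cannot leave `K` through its frontier: backward
uniqueness at the exit point would place an earlier part of it on the trajectories bounding `K`. So
if `K` is left near `z₀` at all, this happens through a small sphere around `z₀`, while `u` stays
above `u z₀`. At a point `q` of the sphere with `u q ≠ u z₀` this is ruled out by monotonicity of
`u` along the trajectory, and at one with `u q = u z₀` by the Łojasiewicz gradient inequality at
`q`, which makes trajectories that start slightly above the level `u q` too short to arrive.

In dimension two the inequality can be proved by one-variable means outside a countable set, which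
is enough because almost every radius avoids that set: if, along a fixed direction `v`, the
first nonzero derivative of `u` has the same order `k + 2` at `p` and at critical points of `u`
accumulating at `p`, then the `(k + 1)`-st derivative along `v` vanishes exactly on an analytic
curve through `p`, the accumulating points force `u` to be constant and critical along that curve,
and Taylor expansion along `v` from the curve gives the inequality at `p`. The same
inequality turns cluster points of a trapped trajectory into limits.
-/

section DirDeriv

variable {E : Type*} [NormedAddCommGroup E] [NormedSpace ℝ E] {f : E → ℝ} {z v : E}

/-- The directional derivative along `v` as an operator on functions, so that the derivatives of
higher order along `v` are its iterates. -/
def dirDeriv (v : E) (f : E → ℝ) (z : E) : ℝ := fderiv ℝ f z v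

lemma analyticAt_iterate_dirDeriv (hf : AnalyticAt ℝ f z) (v : E) (n : ℕ) :
    AnalyticAt ℝ ((dirDeriv v)^[n] f) z := by
  induction n with
  | zero => exact hf
  | succ n ih =>
    rw [Function.iterate_succ_apply']
    exact ((ContinuousLinearMap.apply ℝ ℝ v).analyticAt _).comp ih.fderiv

lemma iteratedFDeriv_apply_const_eq_iterate_dirDeriv (hf : AnalyticAt ℝ f z) (n : ℕ) :
    iteratedFDeriv ℝ n f z (fun _ => v) = (dirDeriv v)^[n] f z := by
  induction n generalizing z with
  | zero => simp
  | succ n ih =>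
    have hD : DifferentiableAt ℝ (iteratedFDeriv ℝ n f) z :=
      hf.contDiffAt.differentiableAt_iteratedFDeriv (n := ⊤) (WithTop.coe_lt_top _)
    rw [Function.iterate_succ_apply', hD.iteratedFDeriv_succ_apply_left', dirDeriv,
      ← EventuallyEq.fderiv_eq (hf.eventually_analyticAt.mono fun _ => ih)]
    rfl

lemma iteratedDeriv_comp_add_smul {q : E} {t : ℝ} (hf : AnalyticAt ℝ f (q + t • v)) (n : ℕ) :
    iteratedDeriv n (fun t : ℝ => f (q + t • v)) t = (dirDeriv v)^[n] f (q + t • v) := by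
  induction n generalizing t with
  | zero => simp
  | succ n ih =>
    have hline : ContinuousAt (fun t : ℝ => q + t • v) t := by fun_prop
    rw [iteratedDeriv_succ, Function.iterate_succ_apply', dirDeriv,
      EventuallyEq.deriv_eq ((hline.eventually hf.eventually_analyticAt).mono fun _ => ih),
      (analyticAt_iterate_dirDeriv hf v n).differentiableAt.deriv_comp_add_smul]

lemma exists_iterate_dirDeriv_ne_zero (hf : AnalyticAt ℝ f z)
    (hconst : ¬ ∀ᶠ w in 𝓝 z, f w = f z) : ∃ v, ∃ n ≥ 1, (dirDeriv v)^[n] f z ≠ 0 := by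
  by_contra! hzero
  obtain ⟨p, r, hp⟩ := hf
  refine hconst ?_
  filter_upwards [Metric.eball_mem_nhds z hp.r_pos] with w hw
  have hsum := hp.hasSum_iteratedFDeriv (y := w - z) (by simpa [edist_eq_enorm_sub] using hw)
  rw [add_sub_cancel] at hsum
  have hsingle := hasSum_single (f := fun n : ℕ => (n.factorial : ℝ)⁻¹ •
      iteratedFDeriv ℝ n f z fun _ => w - z) 0 fun n hn => by
    rw [iteratedFDeriv_apply_const_eq_iterate_dirDeriv hp.analyticAt,
      hzero _ n (Nat.one_le_iff_ne_zero.2 hn), smul_zero]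
  simpa using hsum.unique hsingle

lemma exists_first_iterate_dirDeriv_ne_zero (hcrit : fderiv ℝ f z = 0)
    (hne : ∃ n ≥ 1, (dirDeriv v)^[n] f z ≠ 0) :
    ∃ k, (∀ j, 1 ≤ j → j ≤ k + 1 → (dirDeriv v)^[j] f z = 0) ∧ (dirDeriv v)^[k + 2] f z ≠ 0 := by
  classical
  obtain ⟨hpos, hfind⟩ := Nat.find_spec hne
  have hone : Nat.find hne ≠ 1 := fun h => hfind (by simp [h, dirDeriv, hcrit])
  obtain ⟨k, hk⟩ := Nat.exists_eq_add_of_le' (show 2 ≤ Nat.find hne by omega)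
  refine ⟨k, fun j h1 hj => ?_, hk ▸ hfind⟩
  by_contra hjne
  exact Nat.find_min hne (by omega) ⟨h1, hjne⟩

lemma add_smul_mem_ball_of_mem_uIcc {p q : E} {R s t : ℝ} (hq : q ∈ ball p R)
    (hqs : q + s • v ∈ ball p R) (ht : t ∈ uIcc 0 s) : q + t • v ∈ ball p R := by
  have hconv := (convex_ball p R).affine_preimage (AffineMap.lineMap q (q + v))
  have hsub := hconv.ordConnected.uIcc_subset (x := 0) (y := s) (by simpa using hq)
    (by simpa [AffineMap.lineMap_apply, add_comm] using hqs) ht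
  simpa [AffineMap.lineMap_apply, add_comm] using hsub

section Taylor

variable {q : E} {s : ℝ} {k : ℕ}

lemma exists_sub_eq_iterate_dirDeriv_mul_pow
    (hf : ∀ t ∈ uIcc 0 s, AnalyticAt ℝ f (q + t • v))
    (hzero : ∀ j, 1 ≤ j → j ≤ k → (dirDeriv v)^[j] f q = 0) :
    ∃ ξ ∈ uIcc 0 s, f (q + s • v) - f q =
      (dirDeriv v)^[k + 1] f (q + ξ • v) * s ^ (k + 1) / (k + 1).factorial := by
  rcases eq_or_ne s 0 with rfl | hs
  · exact ⟨0, left_mem_uIcc, by simp⟩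
  set g : ℝ → ℝ := fun t => f (q + t • v)
  have hg : ∀ t ∈ uIcc 0 s, AnalyticAt ℝ g t := fun t ht =>
    (hf t ht).comp_of_eq (f := fun t : ℝ => q + t • v) (by fun_prop) rfl
  have htaylor : taylorWithinEval g k (uIcc 0 s) 0 s = f q := by
    rw [taylor_within_apply, Finset.sum_eq_single_of_mem 0 (by simp)]
    · simp [g]
    · intro j hj hj0
      rw [iteratedDerivWithin_eq_iteratedDeriv (uniqueDiffOn_uIcc hs.symm)
        (hg 0 left_mem_uIcc).contDiffAt left_mem_uIcc,
        iteratedDeriv_comp_add_smul (hf 0 left_mem_uIcc), zero_smul, add_zero,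
        hzero j (Nat.one_le_iff_ne_zero.2 hj0) (Finset.mem_range_succ_iff.1 hj), smul_zero]
  obtain ⟨ξ, hξ, heq⟩ := taylor_mean_remainder_lagrange_iteratedDeriv (n := k) hs.symm
    fun t ht => (hg t ht).contDiffAt.contDiffWithinAt
  have hξ' : ξ ∈ uIcc 0 s := Ioo_subset_Icc_self hξ
  refine ⟨ξ, hξ', ?_⟩
  rwa [htaylor, iteratedDeriv_comp_add_smul (hf ξ hξ'), sub_zero] at heq

lemma abs_sub_le_of_iterate_dirDeriv_le {M : ℝ}
    (hf : ∀ t ∈ uIcc 0 s, AnalyticAt ℝ f (q + t • v))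
    (hzero : ∀ j, 1 ≤ j → j ≤ k → (dirDeriv v)^[j] f q = 0)
    (hM : ∀ t ∈ uIcc 0 s, |(dirDeriv v)^[k + 1] f (q + t • v)| ≤ M) :
    |f (q + s • v) - f q| ≤ M / (k + 1).factorial * |s| ^ (k + 1) := by
  obtain ⟨ξ, hξ, htaylor⟩ := exists_sub_eq_iterate_dirDeriv_mul_pow hf hzero
  rw [htaylor, abs_div, abs_mul, abs_pow, Nat.abs_cast, div_mul_eq_mul_div]
  gcongr
  exact hM ξ hξ

lemma le_abs_sub_of_le_iterate_dirDeriv {c : ℝ}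
    (hf : ∀ t ∈ uIcc 0 s, AnalyticAt ℝ f (q + t • v))
    (hzero : ∀ j, 1 ≤ j → j ≤ k → (dirDeriv v)^[j] f q = 0)
    (hc : ∀ t ∈ uIcc 0 s, c ≤ |(dirDeriv v)^[k + 1] f (q + t • v)|) :
    c / (k + 1).factorial * |s| ^ (k + 1) ≤ |f (q + s • v) - f q| := by
  obtain ⟨ξ, hξ, htaylor⟩ := exists_sub_eq_iterate_dirDeriv_mul_pow hf hzero
  rw [htaylor, abs_div, abs_mul, abs_pow, Nat.abs_cast, div_mul_eq_mul_div]
  gcongr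
  exact hc ξ hξ

end Taylor

end DirDeriv

section Lojasiewicz

variable {E : Type*} [NormedAddCommGroup E] [InnerProductSpace ℝ E] [CompleteSpace E]
  {u : E → ℝ} {p v : E} {k : ℕ}

/-- The Łojasiewicz gradient inequality near `p`, with some exponent `θ ∈ (0, 1)`; it makes the
gradient-descent trajectories of `u` near the level `u p` short. -/
def LojasiewiczAt (u : E → ℝ) (p : E) : Prop :=
  ∃ c > 0, ∃ θ ∈ Ioo (0 : ℝ) 1, ∀ᶠ z in 𝓝 p, c * |u z - u p| ^ θ ≤ ‖gradient u z‖

lemma norm_gradient_eq_norm_fderiv (u : E → ℝ) (z : E) : ‖gradient u z‖ = ‖fderiv ℝ u z‖ :=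
  (InnerProductSpace.toDual ℝ E).symm.norm_map _

lemma abs_dirDeriv_le (u : E → ℝ) (v z : E) : |dirDeriv v u z| ≤ ‖gradient u z‖ * ‖v‖ := by
  rw [norm_gradient_eq_norm_fderiv]
  exact (fderiv ℝ u z).le_opNorm v

lemma lojasiewiczAt_of_eventually_eq (hu : ∀ᶠ z in 𝓝 p, u z = u p) : LojasiewiczAt u p := by
  refine ⟨1, one_pos, 1 / 2, by norm_num, hu.mono fun z hz => ?_⟩
  simp [hz]

lemma lojasiewiczAt_of_fderiv_ne_zero (hu : AnalyticAt ℝ u p) (hne : fderiv ℝ u p ≠ 0) :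
    LojasiewiczAt u p := by
  have hpos : 0 < ‖fderiv ℝ u p‖ := norm_pos_iff.2 hne
  refine ⟨‖fderiv ℝ u p‖ / 2, by positivity, 1 / 2, by norm_num, ?_⟩
  have hval : ContinuousAt (fun z => |u z - u p|) p := (hu.continuousAt.sub_const _).abs
  filter_upwards [hu.fderiv.continuousAt.norm.eventually_const_le (half_lt_self hpos),
    hval.eventually_le_const (u := 1) (by simp)] with z hgrad hz
  rw [norm_gradient_eq_norm_fderiv]
  exact (mul_le_of_le_one_right (by positivity)
    (Real.rpow_le_one (abs_nonneg _) hz (by norm_num))).trans hgrad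

lemma rpow_div_succ_le_of_le_mul_pow_succ {a s M : ℝ} (ha : 0 ≤ a) (hs : 0 ≤ s) (hM : 0 ≤ M)
    (k : ℕ) (h : a ≤ M * s ^ (k + 1)) :
    a ^ ((k : ℝ) / (k + 1)) ≤ M ^ ((k : ℝ) / (k + 1)) * s ^ k :=
  calc a ^ ((k : ℝ) / (k + 1)) ≤ (M * s ^ (k + 1)) ^ ((k : ℝ) / (k + 1)) := by gcongr
    _ = M ^ ((k : ℝ) / (k + 1)) * (s ^ (k + 1)) ^ ((k : ℝ) / (k + 1)) :=
      Real.mul_rpow hM (by positivity)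
    _ = M ^ ((k : ℝ) / (k + 1)) * s ^ k := by
      rw [← Real.rpow_natCast, ← Real.rpow_natCast, ← Real.rpow_mul hs]
      push_cast
      field_simp

lemma lojasiewiczAt_of_eventually_pow_bounds {c M : ℝ} (hc : 0 < c) (hM : 0 < M) (hk : 1 ≤ k)
    (h : ∀ᶠ z in 𝓝 p, ∃ s : ℝ, |u z - u p| ≤ M * |s| ^ (k + 1) ∧ c * |s| ^ k ≤ ‖gradient u z‖) :
    LojasiewiczAt u p := by
  set θ : ℝ := k / (k + 1)
  have : (0 : ℝ) < k := Nat.cast_pos.2 hk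
  refine ⟨c / M ^ θ, by positivity, θ, ⟨by positivity, (div_lt_one (by positivity)).2 (by simp)⟩,
    ?_⟩
  filter_upwards [h] with z ⟨s, hval, hgrad⟩
  calc c / M ^ θ * |u z - u p| ^ θ ≤ c / M ^ θ * (M ^ θ * |s| ^ k) := by
        gcongr
        exact rpow_div_succ_le_of_le_mul_pow_succ (abs_nonneg _) (abs_nonneg _) hM.le k hval
    _ = c * |s| ^ k := by field_simp
    _ ≤ ‖gradient u z‖ := hgrad

/-- `π` replaces Taylor expansion at `p`: along each line in the direction `v`, the function
`u - u p` has a zero of order exactly `k + 2` at a point `π q` of that line. -/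
lemma lojasiewiczAt_of_vanishing_along_lines (hu : AnalyticAt ℝ u p)
    (hne : (dirDeriv v)^[k + 2] u p ≠ 0) {π : E → E} (hπ : Tendsto π (𝓝 p) (𝓝 p))
    (hline : ∀ᶠ q in 𝓝 p, ∃ s : ℝ, q = π q + s • v) (hval : ∀ᶠ q in 𝓝 p, u (π q) = u p)
    (hzero : ∀ᶠ q in 𝓝 p, ∀ j, 1 ≤ j → j ≤ k + 1 → (dirDeriv v)^[j] u (π q) = 0) :
    LojasiewiczAt u p := by
  have hv : 0 < ‖v‖ := by
    rw [norm_pos_iff]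
    rintro rfl
    exact hne (by simp [Function.iterate_succ_apply', dirDeriv])
  set d := |(dirDeriv v)^[k + 2] u p|
  have hd : 0 < d := abs_pos.2 hne
  have hcont := (analyticAt_iterate_dirDeriv hu v (k + 2)).continuousAt.abs
  obtain ⟨R, hR, hball⟩ := Metric.eventually_nhds_iff_ball.1 (hu.eventually_analyticAt.and
    ((hcont.eventually_const_le (half_lt_self hd)).and
      (hcont.eventually_le_const (lt_add_one d))))
  refine lojasiewiczAt_of_eventually_pow_bounds (k := k + 1)
    (c := d / 2 / (k + 1).factorial / ‖v‖) (M := (d + 1) / (k + 2).factorial)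
    (by positivity) (by positivity) (Nat.le_add_left 1 k) ?_
  filter_upwards [ball_mem_nhds p hR, hπ.eventually (ball_mem_nhds p hR), hline, hval, hzero]
    with q hq hq' ⟨s, hs⟩ hval hzero
  have hmem : ∀ t ∈ uIcc 0 s, π q + t • v ∈ ball p R := fun t ht =>
    add_smul_mem_ball_of_mem_uIcc hq' (hs ▸ hq) ht
  have han : ∀ t ∈ uIcc 0 s, AnalyticAt ℝ u (π q + t • v) := fun t ht => (hball _ (hmem t ht)).1
  have hupper := abs_sub_le_of_iterate_dirDeriv_le han hzero
    fun t ht => (hball _ (hmem t ht)).2.2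
  have hlower := le_abs_sub_of_le_iterate_dirDeriv (f := dirDeriv v u) (k := k)
    (fun t ht => analyticAt_iterate_dirDeriv (han t ht) v 1)
    (fun j _ hj => hzero (j + 1) (by omega) (by omega))
    fun t ht => (hball _ (hmem t ht)).2.1
  have hbase : dirDeriv v u (π q) = 0 := hzero 1 le_rfl (by omega)
  rw [← hs, hval] at hupper
  rw [← hs, hbase, sub_zero] at hlower
  refine ⟨s, hupper, ?_⟩
  rw [div_mul_eq_mul_div, div_le_iff₀ hv]
  exact hlower.trans (abs_dirDeriv_le u v q)

end Lojasiewicz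

section ImplicitCurve

variable {E : Type*} [NormedAddCommGroup E] [NormedSpace ℝ E]

lemma exists_continuousLinearMap_ker_eq_span_singleton (hE : Module.finrank ℝ E = 2) {v : E}
    (hv : v ≠ 0) :
    ∃ ℓ : E →L[ℝ] ℝ, ℓ.range = ⊤ ∧ ℓ.ker = Submodule.span ℝ {v} := by
  have := FiniteDimensional.of_finrank_eq_succ hE
  have hspan : Module.finrank ℝ (Submodule.span ℝ {v}) = 1 := finrank_span_singleton hv
  have hlt : Submodule.span ℝ {v} < ⊤ := Submodule.lt_top_of_finrank_lt_finrank (by omega)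
  obtain ⟨ℓ, hne, hle⟩ := Submodule.exists_le_ker_of_lt_top _ hlt
  have hker := Module.Dual.finrank_ker_add_one_of_ne_zero hne
  exact ⟨ℓ.toContinuousLinearMap, Module.Dual.range_eq_top_of_ne_zero hne,
    (Submodule.eq_of_le_of_finrank_eq hle (by omega)).symm⟩

lemma isCompl_ker_span_singleton (f : E →ₗ[ℝ] ℝ) {v : E} (hv : f v ≠ 0) :
    IsCompl f.ker (Submodule.span ℝ {v}) := by
  refine ⟨Submodule.disjoint_def.2 fun x hx hxv => ?_,
    (codisjoint_iff.2 (f.span_singleton_sup_ker_eq_top hv)).symm⟩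
  obtain ⟨s, rfl⟩ := Submodule.mem_span_singleton.1 hxv
  have hs : s = 0 := by simpa [hv] using hx
  rw [hs, zero_smul]

lemma exists_analyticAt_implicit_curve (hE : Module.finrank ℝ E = 2) {F : E → ℝ} {p v : E}
    (hF : AnalyticAt ℝ F p) (hne : dirDeriv v F p ≠ 0) :
    ∃ (ℓ : E →L[ℝ] ℝ) (ψ : ℝ → E), ℓ.ker = Submodule.span ℝ {v} ∧ AnalyticAt ℝ ψ (ℓ p) ∧
      ψ (ℓ p) = p ∧ (∀ᶠ x in 𝓝 (ℓ p), ℓ (ψ x) = x) ∧ ∀ᶠ q in 𝓝 p, F q = F p → ψ (ℓ q) = q := by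
  have := FiniteDimensional.of_finrank_eq_succ hE
  have := FiniteDimensional.complete ℝ E
  have hv : v ≠ 0 := by
    rintro rfl
    exact hne (map_zero _)
  obtain ⟨ℓ, hrange, hker⟩ := exists_continuousLinearMap_ker_eq_span_singleton hE hv
  have hF' : (fderiv ℝ F p : E →ₗ[ℝ] ℝ) ≠ 0 := fun h => hne (LinearMap.congr_fun h v)
  let φ : ImplicitFunctionData ℝ E ℝ ℝ :=
    { leftFun := F
      leftDeriv := fderiv ℝ F p
      rightFun := ℓ
      rightDeriv := ℓ
      pt := p
      hasStrictFDerivAt_leftFun := hF.hasStrictFDerivAt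
      hasStrictFDerivAt_rightFun := ℓ.hasStrictFDerivAt
      range_leftDeriv := Module.Dual.range_eq_top_of_ne_zero hF'
      range_rightDeriv := hrange
      isCompl_ker := hker ▸ isCompl_ker_span_singleton _ hne }
  have hφ : AnalyticAt ℝ φ.implicitFunction.uncurry (F p, ℓ p) :=
    (φ.contDiffAt_implicitFunction hF.contDiffAt ℓ.contDiff.contDiffAt (by simp)).analyticAt
  have hpair : ContinuousAt (fun x : ℝ => (F p, x)) (ℓ p) := by fun_prop
  refine ⟨ℓ, φ.implicitFunction (F p), hker,
    hφ.comp_of_eq (f := fun x : ℝ => (F p, x)) (by fun_prop) rfl,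
    φ.implicitFunction_apply_image.self_of_nhds, hpair.eventually φ.rightFun_implicitFunction,
    φ.leftFun_eq_iff_implicitFunction.mono fun q hq => hq.1⟩

lemma eventually_comp_eq_of_eventually_fderiv_eq_zero [CompleteSpace E] {u : E → ℝ}
    {ψ : ℝ → E} {x₀ : ℝ} (hu : AnalyticAt ℝ u (ψ x₀)) (hψ : AnalyticAt ℝ ψ x₀)
    (hzero : ∀ᶠ x in 𝓝 x₀, fderiv ℝ u (ψ x) = 0) : ∀ᶠ x in 𝓝 x₀, u (ψ x) = u (ψ x₀) := by
  obtain ⟨r, hr, hball⟩ := Metric.eventually_nhds_iff_ball.1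
    (hzero.and ((hψ.continuousAt.eventually hu.eventually_analyticAt).and hψ.eventually_analyticAt))
  have hderiv : ∀ x ∈ ball x₀ r, HasDerivAt (fun x => u (ψ x)) 0 x := fun x hx => by
    obtain ⟨hgrad, hux, hψx⟩ := hball x hx
    have hcomp :=
      hux.differentiableAt.hasFDerivAt.comp_hasDerivAt x hψx.differentiableAt.hasDerivAt
    rwa [hgrad] at hcomp
  filter_upwards [ball_mem_nhds x₀ hr] with x hx
  exact isOpen_ball.is_const_of_deriv_eq_zero (convex_ball x₀ r).isPreconnected
    (fun y hy => (hderiv y hy).differentiableAt.differentiableWithinAt)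
    (fun y hy => (hderiv y hy).deriv) hx (mem_ball_self hr)

end ImplicitCurve

section CountableExceptions

variable {E : Type*} [NormedAddCommGroup E] [InnerProductSpace ℝ E] [CompleteSpace E]
  {u : E → ℝ} {p v : E} {k : ℕ}

lemma lojasiewiczAt_of_frequently_critical (hE : Module.finrank ℝ E = 2) (hu : AnalyticAt ℝ u p)
    (hne : (dirDeriv v)^[k + 2] u p ≠ 0)
    (hfreq : ∃ᶠ q in 𝓝[≠] p, fderiv ℝ u q = 0 ∧
      ∀ j, 1 ≤ j → j ≤ k + 1 → (dirDeriv v)^[j] u q = 0) : LojasiewiczAt u p := by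
  have hD := analyticAt_iterate_dirDeriv hu v
  have hp : (dirDeriv v)^[k + 1] u p = 0 := by
    by_contra hp
    obtain ⟨q, hq, hqne⟩ := (hfreq.and_eventually
      (((hD (k + 1)).continuousAt.eventually_ne hp).filter_mono nhdsWithin_le_nhds)).exists
    exact hqne (hq.2 (k + 1) (by omega) le_rfl)
  rw [Function.iterate_succ_apply'] at hne
  obtain ⟨ℓ, ψ, hker, hψ, hψp, hℓψ, hψℓ⟩ := exists_analyticAt_implicit_curve hE (hD (k + 1)) hne
  have hℓ : Tendsto ℓ (𝓝 p) (𝓝 (ℓ p)) := ℓ.continuous.tendsto p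
  have hfreq' : ∃ᶠ x in 𝓝[≠] ℓ p, fderiv ℝ u (ψ x) = 0 ∧
      ∀ j, 1 ≤ j → j ≤ k + 1 → (dirDeriv v)^[j] u (ψ x) = 0 := by
    refine fun hcon => hfreq ?_
    rw [eventually_nhdsWithin_iff] at hcon ⊢
    filter_upwards [hℓ.eventually hcon, hψℓ] with q hcon hψℓ hqp hq
    have hψq : ψ (ℓ q) = q := hψℓ (by rw [hp, hq.2 (k + 1) (by omega) le_rfl])
    refine hcon (fun h => hqp ?_) (hψq.symm ▸ hq)
    rw [mem_singleton_iff, ← hψq, h, hψp]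
  have hgrad : ∀ᶠ x in 𝓝 (ℓ p), fderiv ℝ u (ψ x) = 0 :=
    (hu.fderiv.comp_of_eq hψ hψp).frequently_zero_iff_eventually_zero.1
      (hfreq'.mono fun _ hx => hx.1)
  have hzero : ∀ᶠ x in 𝓝 (ℓ p), ∀ j ∈ Finset.Icc 1 (k + 1), (dirDeriv v)^[j] u (ψ x) = 0 := by
    refine (eventually_all_finset _).2 fun j hj => ?_
    rw [Finset.mem_Icc] at hj
    exact ((hD j).comp_of_eq hψ hψp).frequently_zero_iff_eventually_zero.1
      (hfreq'.mono fun _ hx => hx.2 j hj.1 hj.2)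
  have hval := eventually_comp_eq_of_eventually_fderiv_eq_zero (hψp.symm ▸ hu) hψ hgrad
  refine lojasiewiczAt_of_vanishing_along_lines (π := ψ ∘ ℓ) hu
    (by rwa [Function.iterate_succ_apply']) (by simpa [hψp] using hψ.continuousAt.tendsto.comp hℓ)
    ((hℓ.eventually hℓψ).mono fun q hq => ?_) (by simpa [hψp] using hℓ.eventually hval)
    ((hℓ.eventually hzero).mono fun q hq j h1 hj => hq j (Finset.mem_Icc.2 ⟨h1, hj⟩))
  have hmem : q - ψ (ℓ q) ∈ ℓ.ker := by simp [hq]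
  obtain ⟨s, hs⟩ := Submodule.mem_span_singleton.1 (hker ▸ hmem)
  exact ⟨s, by simp [hs]⟩

lemma exists_countable_setOf_not_lojasiewiczAt (hE : Module.finrank ℝ E = 2) {z : E}
    (hu : AnalyticAt ℝ u z) : ∃ r > 0, {p ∈ ball z r | ¬ LojasiewiczAt u p}.Countable := by
  have := FiniteDimensional.of_finrank_eq_succ hE
  by_cases hconst : ∀ᶠ w in 𝓝 z, u w = u z
  · obtain ⟨r, hr, hball⟩ := Metric.eventually_nhds_iff_ball.1 hconst
    refine ⟨r, hr, (countable_empty).mono fun p ⟨hp, hbad⟩ => hbad ?_⟩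
    refine lojasiewiczAt_of_eventually_eq
      (eventually_of_mem (isOpen_ball.mem_nhds hp) fun w hw => ?_)
    rw [hball w hw, hball p hp]
  obtain ⟨v, n, hn, hne⟩ := exists_iterate_dirDeriv_ne_zero hu hconst
  obtain ⟨r, hr, hball⟩ := Metric.eventually_nhds_iff_ball.1 (hu.eventually_analyticAt.and
    ((analyticAt_iterate_dirDeriv hu v n).continuousAt.eventually_ne hne))
  let S (k : ℕ) : Set E := {p | (p ∈ ball z r ∧ ¬ LojasiewiczAt u p) ∧ (fderiv ℝ u p = 0 ∧
    ∀ j, 1 ≤ j → j ≤ k + 1 → (dirDeriv v)^[j] u p = 0) ∧ (dirDeriv v)^[k + 2] u p ≠ 0}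
  have hS (k : ℕ) : (S k).Countable := by
    have : DiscreteTopology (S k) := by
      refine discreteTopology_subtype_iff.2 fun p ⟨⟨hp, hbad⟩, _, hpne⟩ => ?_
      by_contra hacc
      have hfreq : ∃ᶠ q in 𝓝[≠] p, q ∈ S k := frequently_mem_iff_neBot.2 ⟨hacc⟩
      exact hbad (lojasiewiczAt_of_frequently_critical hE (hball p hp).1 hpne
        (hfreq.mono fun _ hq => hq.2.1))
    exact countable_coe_iff.1 countable_of_Lindelof_of_discrete
  refine ⟨r, hr, (countable_iUnion hS).mono fun p hp => ?_⟩
  obtain ⟨hu', hne'⟩ := hball p hp.1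
  have hcrit : fderiv ℝ u p = 0 := by
    by_contra hcrit
    exact hp.2 (lojasiewiczAt_of_fderiv_ne_zero hu' hcrit)
  obtain ⟨k, hzero, hk⟩ := exists_first_iterate_dirDeriv_ne_zero hcrit ⟨n, hn, hne'⟩
  exact mem_iUnion.2 ⟨k, hp, ⟨hcrit, hzero⟩, hk⟩

end CountableExceptions

section GradientDescent

variable {E : Type*} [NormedAddCommGroup E] [InnerProductSpace ℝ E] [CompleteSpace E]
  {u : E → ℝ} {γ : ℝ → E} {q : E} {a b t κ c θ : ℝ} {s : Set ℝ}

/-- `γ` is a gradient-descent trajectory of `u` on the set of times `s`, with one-sided derivatives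
at the end points of `s`. -/
def IsGradientDescentOn (u : E → ℝ) (γ : ℝ → E) (s : Set ℝ) : Prop :=
  IsIntegralCurveOn γ (fun _ z => -gradient u z) s

namespace IsGradientDescentOn

lemma hasDerivWithinAt_comp (hγ : IsGradientDescentOn u γ s) (ht : t ∈ s)
    (hu : DifferentiableAt ℝ u (γ t)) :
    HasDerivWithinAt (fun t => u (γ t)) (-‖gradient u (γ t)‖ ^ 2) s t := by
  have hcomp := hu.hasFDerivAt.comp_hasDerivWithinAt t (hγ t ht)
  rwa [map_neg, ← inner_gradient_left, real_inner_self_eq_norm_sq] at hcomp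

lemma antitoneOn_comp (hγ : IsGradientDescentOn u γ s) (hs : Convex ℝ s)
    (hu : ∀ t ∈ s, DifferentiableAt ℝ u (γ t)) : AntitoneOn (fun t => u (γ t)) s :=
  antitoneOn_of_hasDerivWithinAt_nonpos hs
    (fun t ht => (hγ.hasDerivWithinAt_comp ht (hu t ht)).continuousWithinAt)
    (fun t ht => (hγ.hasDerivWithinAt_comp (interior_subset ht)
      (hu t (interior_subset ht))).mono interior_subset)
    fun _ _ => neg_nonpos.2 (sq_nonneg _)

lemma eventually_comp_eq_of_comp_eq (hγ : IsGradientDescentOn u γ (Icc a b))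
    (hu : ∀ t ∈ Icc a b, DifferentiableAt ℝ u (γ t)) (hκ : ∀ t ∈ Icc a b, κ ≤ u (γ t))
    (ht : t ∈ Ico a b) (heq : u (γ t) = κ) : ∀ᶠ s in 𝓝[≥] t, u (γ s) = κ := by
  filter_upwards [Icc_mem_nhdsGE ht.2] with s hs
  have hsab : s ∈ Icc a b := ⟨ht.1.trans hs.1, hs.2⟩
  exact le_antisymm (heq ▸ hγ.antitoneOn_comp (convex_Icc a b) hu ⟨ht.1, ht.2.le⟩ hsab hs.1)
    (hκ s hsab)

lemma gradient_eq_zero_of_comp_eq (hγ : IsGradientDescentOn u γ (Icc a b))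
    (hu : ∀ t ∈ Icc a b, DifferentiableAt ℝ u (γ t)) (hκ : ∀ t ∈ Icc a b, κ ≤ u (γ t))
    (ht : t ∈ Ico a b) (heq : u (γ t) = κ) : gradient u (γ t) = 0 := by
  have hderiv : HasDerivWithinAt (fun t => u (γ t)) (-‖gradient u (γ t)‖ ^ 2) (Ici t) t :=
    (hγ.hasDerivWithinAt_comp ⟨ht.1, ht.2.le⟩ (hu t ⟨ht.1, ht.2.le⟩)).mono_of_mem_nhdsWithin
      (Icc_mem_nhdsGE_of_mem ht)
  have hconst : HasDerivWithinAt (fun t => u (γ t)) 0 (Ici t) t :=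
    (hasDerivWithinAt_const t (Ici t) κ).congr_of_eventuallyEq
      (hγ.eventually_comp_eq_of_comp_eq hu hκ ht heq) heq
  have hzero := (uniqueDiffOn_Ici t t self_mem_Ici).eq_deriv _ hderiv hconst
  simpa using hzero

lemma hasDerivWithinAt_comp_sub_rpow (hγ : IsGradientDescentOn u γ (Icc a b))
    (hu : ∀ t ∈ Icc a b, DifferentiableAt ℝ u (γ t)) (hκ : ∀ t ∈ Icc a b, κ ≤ u (γ t))
    (ht : t ∈ Ico a b) :
    HasDerivWithinAt (fun s => (u (γ s) - κ) ^ (1 - θ))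
      (-((1 - θ) * (‖gradient u (γ t)‖ ^ 2 * (u (γ t) - κ) ^ (-θ)))) (Ici t) t := by
  by_cases heq : u (γ t) = κ
  · rw [hγ.gradient_eq_zero_of_comp_eq hu hκ ht heq]
    refine ((hasDerivWithinAt_const t (Ici t) ((0 : ℝ) ^ (1 - θ))).congr_of_eventuallyEq ?_
      (by rw [heq, sub_self])).congr_deriv (by simp)
    filter_upwards [hγ.eventually_comp_eq_of_comp_eq hu hκ ht heq] with s hs
    rw [hs, sub_self]
  · have hcomp := (hγ.hasDerivWithinAt_comp ⟨ht.1, ht.2.le⟩ (hu t ⟨ht.1, ht.2.le⟩)).sub_const κ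
    refine ((hcomp.rpow_const (p := 1 - θ) (Or.inl (sub_ne_zero.2 heq))).mono_of_mem_nhdsWithin
      (Icc_mem_nhdsGE_of_mem ht)).congr_deriv ?_
    rw [sub_sub_cancel_left]
    ring

/-- The Łojasiewicz inequality makes `(u - κ) ^ (1 - θ)` decrease at least proportionally to the
arc length, so its initial value bounds the length. -/
lemma dist_le_rpow_div (hγ : IsGradientDescentOn u γ (Icc a b)) (hab : a ≤ b) (hc : 0 < c)
    (hθ : θ < 1) (hu : ∀ t ∈ Icc a b, DifferentiableAt ℝ u (γ t))
    (hκ : ∀ t ∈ Icc a b, κ ≤ u (γ t))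
    (hloj : ∀ t ∈ Ico a b, c * |u (γ t) - κ| ^ θ ≤ ‖gradient u (γ t)‖) :
    dist (γ b) (γ a) ≤ (u (γ a) - κ) ^ (1 - θ) / (c * (1 - θ)) := by
  have hθ' : 0 < 1 - θ := sub_pos.2 hθ
  set H : ℝ → ℝ := fun t => u (γ t) - κ
  have hH : ∀ t ∈ Icc a b, 0 ≤ H t := fun t ht => sub_nonneg.2 (hκ t ht)
  have hHcont : ContinuousOn H (Icc a b) := fun t ht =>
    (hγ.hasDerivWithinAt_comp ht (hu t ht)).continuousWithinAt.sub continuousWithinAt_const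
  have hspeed : ∀ t ∈ Ico a b, ‖-gradient u (γ t)‖ ≤ ‖gradient u (γ t)‖ ^ 2 * H t ^ (-θ) / c := by
    intro t ht
    rw [norm_neg]
    rcases (hH t ⟨ht.1, ht.2.le⟩).eq_or_lt with h0 | hpos
    · simp [hγ.gradient_eq_zero_of_comp_eq hu hκ ht (sub_eq_zero.1 h0.symm)]
    · have hloj := hloj t ht
      rw [abs_of_pos hpos] at hloj
      rw [Real.rpow_neg hpos.le, le_div_iff₀ hc, ← div_eq_mul_inv,
        le_div_iff₀ (Real.rpow_pos_of_pos hpos θ), mul_assoc, sq]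
      gcongr
  have hbound : ‖γ b - γ a‖ ≤ (H a ^ (1 - θ) - H b ^ (1 - θ)) / (c * (1 - θ)) :=
    image_norm_le_of_norm_deriv_right_le_deriv_boundary' (f := fun t => γ t - γ a)
      (f' := fun t => -gradient u (γ t))
      (B := fun t => (H a ^ (1 - θ) - H t ^ (1 - θ)) / (c * (1 - θ)))
      (B' := fun t => ‖gradient u (γ t)‖ ^ 2 * H t ^ (-θ) / c)
      (hγ.continuousOn.sub continuousOn_const)
      (fun t ht => ((hγ t ⟨ht.1, ht.2.le⟩).mono_of_mem_nhdsWithin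
        (Icc_mem_nhdsGE_of_mem ht)).sub_const _)
      (by simp)
      ((continuousOn_const.sub (hHcont.rpow_const fun _ _ => Or.inr hθ'.le)).div_const _)
      (fun t ht => (((hγ.hasDerivWithinAt_comp_sub_rpow hu hκ ht).const_sub _).div_const
        _).congr_deriv (by simp only [H]; field_simp))
      hspeed (right_mem_Icc.2 hab)
  rw [dist_eq_norm]
  refine hbound.trans ?_
  gcongr
  exact sub_le_self _ (Real.rpow_nonneg (hH b (right_mem_Icc.2 hab)) _)

end IsGradientDescentOn

lemma tendsto_sub_rpow_div (κ C : ℝ) (hθ : θ < 1) :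
    Tendsto (fun x : ℝ => (x - κ) ^ (1 - θ) / C) (𝓝 κ) (𝓝 0) := by
  have hθ' : 0 < 1 - θ := sub_pos.2 hθ
  have hcont : ContinuousAt (fun x : ℝ => (x - κ) ^ (1 - θ) / C) κ :=
    ((continuousAt_id.sub continuousAt_const).rpow_const (Or.inr hθ'.le)).div_const C
  simpa [Real.zero_rpow hθ'.ne'] using hcont.tendsto

lemma LojasiewiczAt.exists_forall_dist_lt (hloj : LojasiewiczAt u q)
    (hu : ∀ᶠ z in 𝓝 q, DifferentiableAt ℝ u z) :
    ∃ r > 0, ∀ η > 0, ∃ ω > u q, ∀ (γ : ℝ → E) (a b : ℝ), a ≤ b →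
      IsGradientDescentOn u γ (Icc a b) → MapsTo γ (Icc a b) (closedBall q r) →
      (∀ t ∈ Icc a b, u q ≤ u (γ t)) → u (γ a) < ω → dist (γ b) (γ a) < η := by
  obtain ⟨c, hc, θ, hθ, hloj⟩ := hloj
  obtain ⟨r, hr, hball⟩ := nhds_basis_closedBall.eventually_iff.1 (hloj.and hu)
  refine ⟨r, hr, fun η hη => ?_⟩
  obtain ⟨ε, hε, hsmall⟩ := Metric.eventually_nhds_iff.1
    ((tendsto_sub_rpow_div (u q) (c * (1 - θ)) hθ.2).eventually_lt_const hη)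
  refine ⟨u q + ε, lt_add_of_pos_right _ hε, fun γ a b hab hγ hin hge hlt => ?_⟩
  refine (hγ.dist_le_rpow_div hab hc hθ.2 (fun t ht => (hball (hin ht)).2) hge
    fun t ht => (hball (hin ⟨ht.1, ht.2.le⟩)).1).trans_lt (hsmall ?_)
  rw [Real.dist_eq, abs_lt]
  constructor <;> linarith [hge a (left_mem_Icc.2 hab)]

end GradientDescent

section Exit

variable {X : Type*} [TopologicalSpace X] {O : Set X} {γ : ℝ → X} {a b : ℝ}

lemma exists_first_exit (hO : IsOpen O) (hγ : ContinuousOn γ (Icc a b)) (ha : γ a ∈ O)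
    (hexit : ∃ t ∈ Icc a b, γ t ∉ O) :
    ∃ t ∈ Ioc a b, γ t ∈ frontier O ∧ ∀ s ∈ Ico a t, γ s ∈ O := by
  have hcompact : IsCompact (Icc a b ∩ γ ⁻¹' Oᶜ) := isCompact_Icc.of_isClosed_subset
    (hγ.preimage_isClosed_of_isClosed isClosed_Icc hO.isClosed_compl) inter_subset_left
  obtain ⟨t, ⟨ht, htO⟩, hleast⟩ := hcompact.exists_isLeast hexit
  have hbefore : ∀ s ∈ Ico a t, γ s ∈ O := fun s hs => by
    by_contra hsO
    exact hs.2.not_ge (hleast ⟨⟨hs.1, hs.2.le.trans ht.2⟩, hsO⟩)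
  have hat : a < t := ht.1.lt_of_ne fun h => htO (h ▸ ha)
  refine ⟨t, ⟨hat, ht.2⟩, hO.frontier_eq ▸ ⟨?_, htO⟩, hbefore⟩
  exact ((hγ t ht).mono (Ico_subset_Icc_self.trans (Icc_subset_Icc_right ht.2))).mem_closure
    (by rw [closure_Ico hat.ne]; exact right_mem_Icc.2 ht.1) hbefore

lemma exists_last_entry (hO : IsOpen O) (hγ : ContinuousOn γ (Icc a b)) (hb : γ b ∈ O)
    (hentry : ∃ t ∈ Icc a b, γ t ∉ O) :
    ∃ t ∈ Ico a b, γ t ∈ frontier O ∧ ∀ s ∈ Ioc t b, γ s ∈ O := by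
  obtain ⟨t, ht, htO, hafter⟩ := exists_first_exit (γ := fun t => γ (-t)) (a := -b) (b := -a) hO
    (hγ.comp continuousOn_neg fun t ht => by simpa [and_comm, neg_le, le_neg] using ht) (by simpa)
    (hentry.imp' (- ·) fun t ⟨ht, htO⟩ => ⟨by simpa [and_comm] using ht, by simpa using htO⟩)
  refine ⟨-t, ⟨by linarith [ht.2], by linarith [ht.1]⟩, htO, fun s hs => ?_⟩
  simpa using hafter (-s) ⟨by linarith [hs.2], by linarith [hs.1]⟩

end Exit

section NoArrival

variable {E : Type*} [NormedAddCommGroup E] [InnerProductSpace ℝ E] [CompleteSpace E]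
  {u : E → ℝ} {z₀ q z w : E} {κ : ℝ} {C : Set E}

/-- Some gradient-descent trajectory of `u` leads from `z` to `w` in finite time, through points
where `u` is differentiable and at least `κ`. -/
def DescendsAbove (u : E → ℝ) (κ : ℝ) (z w : E) : Prop :=
  ∃ b ≥ 0, ∃ γ : ℝ → E, γ 0 = z ∧ γ b = w ∧ IsGradientDescentOn u γ (Icc 0 b) ∧
    (∀ t ∈ Icc 0 b, DifferentiableAt ℝ u (γ t)) ∧ ∀ t ∈ Icc 0 b, κ ≤ u (γ t)

namespace DescendsAbove

lemma le_right (h : DescendsAbove u κ z w) : κ ≤ u w := by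
  obtain ⟨b, hb, γ, -, rfl, -, -, hκ⟩ := h
  exact hκ b (right_mem_Icc.2 hb)

lemma right_le_left (h : DescendsAbove u κ z w) : u w ≤ u z := by
  obtain ⟨b, hb, γ, rfl, rfl, hγ, hu, -⟩ := h
  exact hγ.antitoneOn_comp (convex_Icc 0 b) hu (left_mem_Icc.2 hb) (right_mem_Icc.2 hb) hb

end DescendsAbove

lemma LojasiewiczAt.eventually_not_descendsAbove (hq : LojasiewiczAt u q)
    (huq : ∀ᶠ z in 𝓝 q, DifferentiableAt ℝ u z) (hu₀ : ContinuousAt u z₀) (hne : z₀ ≠ q)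
    (hlevel : u z₀ = u q) : ∀ᶠ w in 𝓝 (z₀, q), ¬ DescendsAbove u (u q) w.1 w.2 := by
  obtain ⟨R, hR, hshort⟩ := hq.exists_forall_dist_lt huq
  obtain ⟨r, hr, hrlt⟩ := exists_between (lt_min hR (dist_pos.2 hne))
  obtain ⟨hrR, hrq⟩ := lt_min_iff.1 hrlt
  obtain ⟨ω, hω, hshort⟩ := hshort (r / 2) (half_pos hr)
  have hlow : ∀ᶠ z in 𝓝 z₀, u z < ω := hu₀.eventually_lt_const (hlevel ▸ hω)
  have hfar : ∀ᶠ z in 𝓝 z₀, z ∉ closedBall q r :=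
    isClosed_closedBall.isOpen_compl.mem_nhds (by simpa using hrq)
  have hnear : ∀ᶠ w in 𝓝 q, w ∈ ball q (r / 2) := ball_mem_nhds q (half_pos hr)
  filter_upwards [(hlow.and hfar).prod_nhds hnear] with ⟨z, w⟩ ⟨⟨hzω, hzr⟩, hwr⟩
  rintro ⟨b, hb, γ, rfl, rfl, hγ, hu, hκ⟩
  obtain ⟨t, ht, htr, hafter⟩ := exists_last_entry isOpen_ball hγ.continuousOn
    (ball_subset_ball (half_le_self hr.le) hwr)
    ⟨0, left_mem_Icc.2 hb, fun h => hzr (ball_subset_closedBall h)⟩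
  have htq : dist (γ t) q = r := frontier_ball_subset_sphere htr
  have hsub : Icc t b ⊆ Icc 0 b := Icc_subset_Icc_left ht.1
  have hin : MapsTo γ (Icc t b) (closedBall q R) := fun s hs => by
    refine closedBall_subset_closedBall hrR.le ?_
    rcases hs.1.eq_or_lt with rfl | hts
    · exact htq.le
    · exact ball_subset_closedBall (hafter s ⟨hts, hs.2⟩)
  have htω : u (γ t) < ω := (hγ.antitoneOn_comp (convex_Icc 0 b) hu (left_mem_Icc.2 hb)
    ⟨ht.1, ht.2.le⟩ ht.1).trans_lt hzω
  have hdist := hshort γ t b ht.2.le (hγ.mono hsub) hin (fun s hs => hκ s (hsub hs)) htω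
  linarith [dist_triangle_left (γ t) q (γ b), mem_ball.1 hwr]

lemma eventually_not_descendsAbove (hu₀ : ContinuousAt u z₀)
    (huq : ∀ᶠ z in 𝓝 q, DifferentiableAt ℝ u z) (hq : LojasiewiczAt u q) (hne : z₀ ≠ q) :
    ∀ᶠ w in 𝓝 (z₀, q), ¬ DescendsAbove u (u z₀) w.1 w.2 := by
  have hstart : Tendsto (fun w : E × E => u w.1) (𝓝 (z₀, q)) (𝓝 (u z₀)) :=
    hu₀.tendsto.comp continuous_fst.continuousAt
  have hend : Tendsto (fun w : E × E => u w.2) (𝓝 (z₀, q)) (𝓝 (u q)) :=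
    huq.self_of_nhds.continuousAt.tendsto.comp continuous_snd.continuousAt
  rcases lt_trichotomy (u q) (u z₀) with hlt | heq | hgt
  · filter_upwards [hend.eventually_lt_const hlt] with w hw h
    exact hw.not_ge h.le_right
  · rw [← heq]
    exact hq.eventually_not_descendsAbove huq hu₀ hne heq.symm
  · filter_upwards [hstart.eventually_lt hend hgt] with w hw h
    exact hw.not_ge h.right_le_left

lemma eventually_forall_not_descendsAbove (hC : IsCompact C) (hz₀ : z₀ ∉ C)
    (hu₀ : ContinuousAt u z₀) (hu : ∀ q ∈ C, ∀ᶠ z in 𝓝 q, DifferentiableAt ℝ u z)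
    (hloj : ∀ q ∈ C, LojasiewiczAt u q) :
    ∀ᶠ z in 𝓝 z₀, ∀ q ∈ C, ¬ DescendsAbove u (u z₀) z q :=
  hC.eventually_forall_of_forall_eventually fun q hq =>
    eventually_not_descendsAbove hu₀ (hu q hq) (hloj q hq) (ne_of_mem_of_not_mem hq hz₀).symm

end NoArrival

section Convergence

lemma exists_sphere_disjoint_of_countable {X : Type*} [PseudoMetricSpace X] {S : Set X}
    (hS : S.Countable) (p : X) {η : ℝ} (hη : 0 < η) : ∃ ρ ∈ Ioo 0 η, Disjoint (sphere p ρ) S := by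
  have hdist : ((dist · p) '' S).Countable := hS.image _
  obtain ⟨ρ, hρ, hρS⟩ : (Ioo 0 η \ (dist · p) '' S).Nonempty := by
    rw [sdiff_nonempty]
    exact fun hsub => hη.not_ge (Cardinal.Real.Ioo_countable_iff.1 (hdist.mono hsub))
  exact ⟨ρ, hρ, disjoint_left.2 fun q hq hqS => hρS ⟨q, hqS, hq⟩⟩

lemma exists_mem_sphere_mapClusterPt {X : Type*} [MetricSpace X] {γ : ℝ → X} {C : Set X} {p : X}
    (hC : IsCompact C) (hγ : ContinuousOn γ (Ici 0)) (hγC : MapsTo γ (Ici 0) C)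
    (hp : MapClusterPt p atTop γ) (hnot : ¬ Tendsto γ atTop (𝓝 p)) :
    ∃ η > 0, ∀ ρ ∈ Ioo 0 η, ∃ q ∈ sphere p ρ ∩ C, MapClusterPt q atTop γ := by
  obtain ⟨η, hη, hfar⟩ : ∃ η > 0, ∃ᶠ t in atTop, γ t ∉ ball p η := by
    simpa only [Metric.tendsto_nhds, mem_ball, not_forall, exists_prop, not_eventually] using hnot
  refine ⟨η, hη, fun ρ hρ => ?_⟩
  refine (hC.inter_left isClosed_sphere).exists_mapClusterPt_of_frequently
    (frequently_atTop.2 fun N => ?_)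
  obtain ⟨a, ha, haN⟩ := ((hp.frequently (ball_mem_nhds p hρ.1)).and_eventually
    (eventually_ge_atTop (max N 0))).exists
  obtain ⟨b, hb, hab⟩ := (hfar.and_eventually (eventually_ge_atTop a)).exists
  have ha0 : 0 ≤ a := (le_max_right N 0).trans haN
  obtain ⟨t, ht, htρ, -⟩ := exists_first_exit isOpen_ball
    (hγ.mono fun s hs => ha0.trans hs.1) ha
    ⟨b, right_mem_Icc.2 hab, fun h => hb (ball_subset_ball hρ.2.le h)⟩
  exact ⟨t, (le_max_left N 0).trans (haN.trans ht.1.le), frontier_ball_subset_sphere htρ,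
    hγC (ha0.trans ht.1.le)⟩

variable {E : Type*} [NormedAddCommGroup E] [InnerProductSpace ℝ E] [CompleteSpace E]
  {u : E → ℝ} {γ : ℝ → E} {q : E} {C : Set E}

namespace IsGradientDescentOn

lemma le_comp_of_mapClusterPt (hγ : IsGradientDescentOn u γ (Ici 0))
    (hu : ∀ t ∈ Ici (0 : ℝ), DifferentiableAt ℝ u (γ t)) (huq : ContinuousAt u q)
    (hq : MapClusterPt q atTop γ) : ∀ t ∈ Ici (0 : ℝ), u q ≤ u (γ t) := by
  intro t ht
  by_contra! hlt
  obtain ⟨s, hs, hts⟩ := ((hq.frequently (huq.eventually_const_lt hlt)).and_eventually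
    (eventually_ge_atTop t)).exists
  exact hs.not_ge (hγ.antitoneOn_comp (convex_Ici 0) hu ht (ht.trans hts) hts)

lemma tendsto_of_mapClusterPt (hγ : IsGradientDescentOn u γ (Ici 0))
    (hu : ∀ t ∈ Ici (0 : ℝ), DifferentiableAt ℝ u (γ t))
    (huq : ∀ᶠ z in 𝓝 q, DifferentiableAt ℝ u z) (hloj : LojasiewiczAt u q)
    (hq : MapClusterPt q atTop γ) : Tendsto γ atTop (𝓝 q) := by
  have hcont : ContinuousAt u q := huq.self_of_nhds.continuousAt
  have hlevel := hγ.le_comp_of_mapClusterPt hu hcont hq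
  obtain ⟨R, hR, hshort⟩ := hloj.exists_forall_dist_lt huq
  rw [Metric.tendsto_atTop']
  intro η hη
  set r := min R η
  have hr : 0 < r := lt_min hR hη
  obtain ⟨ω, hω, hshort⟩ := hshort (r / 2) (half_pos hr)
  have hclose : ∀ᶠ z in 𝓝 q, z ∈ ball q (r / 2) ∧ u z < ω :=
    (eventually_mem_set.2 (ball_mem_nhds q (half_pos hr))).and (hcont.eventually_lt_const hω)
  obtain ⟨a, ⟨har, haω⟩, ha0⟩ :=
    ((hq.frequently hclose).and_eventually (eventually_ge_atTop 0)).exists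
  refine ⟨a, fun b hb => ?_⟩
  suffices hstay : γ b ∈ ball q r from hstay.trans_le (min_le_right R η)
  by_contra hbr
  obtain ⟨t, ht, htr, hbefore⟩ := exists_first_exit isOpen_ball
    (hγ.continuousOn.mono fun s hs => ha0.trans hs.1)
    (ball_subset_ball (half_le_self hr.le) har) ⟨b, right_mem_Icc.2 hb.le, hbr⟩
  have htq : dist (γ t) q = r := frontier_ball_subset_sphere htr
  have hin : MapsTo γ (Icc a t) (closedBall q R) := fun s hs => by
    refine closedBall_subset_closedBall (min_le_left R η) ?_
    rcases hs.2.eq_or_lt with rfl | hst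
    · exact htq.le
    · exact ball_subset_closedBall (hbefore s ⟨hs.1, hst⟩)
  have hdist := hshort γ a t ht.1.le (hγ.mono fun s hs => ha0.trans hs.1) hin
    (fun s hs => hlevel s (ha0.trans hs.1)) haω
  linarith [dist_triangle (γ t) (γ a) q, mem_ball.1 har]

lemma exists_tendsto_of_mapsTo_isCompact (hγ : IsGradientDescentOn u γ (Ici 0))
    (hC : IsCompact C) (hγC : MapsTo γ (Ici 0) C)
    (hu : ∀ q ∈ C, ∀ᶠ z in 𝓝 q, DifferentiableAt ℝ u z)
    (hcount : {q ∈ C | ¬ LojasiewiczAt u q}.Countable) : ∃ q, Tendsto γ atTop (𝓝 q) := by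
  obtain ⟨p, -, hp⟩ := hC.exists_mapClusterPt_of_frequently
    ((eventually_ge_atTop 0).mono hγC).frequently
  by_contra! hnot
  obtain ⟨η, hη, hcross⟩ :=
    exists_mem_sphere_mapClusterPt hC hγ.continuousOn hγC hp (hnot p)
  obtain ⟨ρ, hρ, hdisj⟩ := exists_sphere_disjoint_of_countable hcount p hη
  obtain ⟨q, ⟨hqρ, hqC⟩, hq⟩ := hcross ρ hρ
  have hloj : LojasiewiczAt u q := by
    by_contra hbad
    exact disjoint_left.1 hdisj hqρ ⟨hqC, hbad⟩
  exact hnot q (hγ.tendsto_of_mapClusterPt (fun t ht => (hu _ (hγC ht)).self_of_nhds)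
    (hu q hqC) hloj hq)

end IsGradientDescentOn

end Convergence

section Trapping

variable {E : Type*} [NormedAddCommGroup E] [InnerProductSpace ℝ E] [CompleteSpace E]
  {u : E → ℝ} {α β γ : ℝ → E} {z₀ z w : E} {a b κ ρ : ℝ} {s s' : Set ℝ} {K S : Set E}

lemma contDiffAt_gradient (hu : ContDiffAt ℝ 2 u z) : ContDiffAt ℝ 1 (gradient u) z :=
  (InnerProductSpace.toDual ℝ E).symm.contDiff.contDiffAt.comp z
    (hu.fderiv_right (m := 1) (by norm_num))

namespace IsGradientDescentOn

lemma comp_add_const (hγ : IsGradientDescentOn u γ s) {dt : ℝ} (hs : MapsTo (· + dt) s' s) :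
    IsGradientDescentOn u (fun t => γ (t + dt)) s' :=
  (hγ.comp_add dt).mono fun t ht => ⟨t + dt, hs ht, by simp⟩

lemma exists_eq_of_eq_right (hα : IsGradientDescentOn u α (Icc a b))
    (hβ : IsGradientDescentOn u β (Icc a b)) (hab : a < b) (hu : ContDiffAt ℝ 2 u (α b))
    (heq : α b = β b) : ∃ l ∈ Ico a b, α l = β l := by
  obtain ⟨L, N, hN, hlip⟩ := (contDiffAt_gradient hu).neg.exists_lipschitzOnWith
  have hend : ∀ {γ : ℝ → E}, IsGradientDescentOn u γ (Icc a b) → γ b = α b →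
      ∀ᶠ t in 𝓝[≤] b, γ t ∈ N := fun {γ} hγ hγb => by
    rw [← nhdsWithin_Icc_eq_nhdsLE hab]
    exact (hγ.continuousOn b (right_mem_Icc.2 hab.le)).eventually_mem (hγb ▸ hN)
  obtain ⟨l, hl, hlN⟩ := (mem_nhdsLE_iff_exists_mem_Ico_Ioc_subset hab).1
    ((hend hα rfl).and (hend hβ heq.symm))
  have hderiv : ∀ {γ : ℝ → E}, IsGradientDescentOn u γ (Icc a b) → ∀ t ∈ Ioc l b,
      HasDerivWithinAt γ (-gradient u (γ t)) (Iic t) t := fun hγ t ht =>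
    (hγ t ⟨hl.1.trans ht.1.le, ht.2⟩).mono_of_mem_nhdsWithin
      (Icc_mem_nhdsLE_of_mem ⟨hl.1.trans_lt ht.1, ht.2⟩)
  have hlb : Icc l b ⊆ Icc a b := Icc_subset_Icc_left hl.1
  exact ⟨l, hl, ODE_solution_unique_of_mem_Icc_left (v := fun _ z => -gradient u z)
    (s := fun _ => N) (fun _ _ => hlip) (hα.continuousOn.mono hlb) (hderiv hα)
    (fun t ht => (hlN ht).1) (hβ.continuousOn.mono hlb) (hderiv hβ) (fun t ht => (hlN ht).2) heq
    (left_mem_Icc.2 hl.2.le)⟩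

end IsGradientDescentOn

/-- Some gradient-descent trajectory of `u` ends at `w` after running inside `S` for a positive
time. For `S` the frontier of an open set `K`, this prevents trajectories in `K` from leaving `K`
through `w`. -/
def BackwardViableAt (u : E → ℝ) (S : Set E) (w : E) : Prop :=
  ∃ a < 0, ∃ β : ℝ → E, β 0 = w ∧ IsGradientDescentOn u β (Icc a 0) ∧ MapsTo β (Icc a 0) S

namespace BackwardViableAt

lemma exists_mem_of_trajectory (hS : BackwardViableAt u S (γ b))
    (hγ : IsGradientDescentOn u γ (Icc a b)) (hab : a < b) (hu : ContDiffAt ℝ 2 u (γ b)) :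
    ∃ l ∈ Ico a b, γ l ∈ S := by
  obtain ⟨c, hc, β, hβ0, hβ, hβS⟩ := hS
  have hm : max c (a - b) < 0 := max_lt hc (sub_neg.2 hab)
  have hshift : IsGradientDescentOn u (fun t => γ (t + b)) (Icc (max c (a - b)) 0) :=
    hγ.comp_add_const fun t ht =>
      ⟨sub_le_iff_le_add.1 ((le_max_right _ _).trans ht.1), add_le_of_nonpos_left ht.2⟩
  have hsub : Icc (max c (a - b)) 0 ⊆ Icc c 0 := Icc_subset_Icc_left (le_max_left _ _)
  obtain ⟨l, hl, heq⟩ := hshift.exists_eq_of_eq_right (hβ.mono hsub) hm (by simpa using hu)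
    (by simp [hβ0])
  refine ⟨l + b, ⟨sub_le_iff_le_add.1 ((le_max_right _ _).trans hl.1),
    add_lt_of_neg_left b hl.2⟩, ?_⟩
  rw [heq]
  exact hβS (hsub ⟨hl.1, hl.2.le⟩)

lemma of_gradient_eq_zero (hw : gradient u w = 0) (hwS : w ∈ S) : BackwardViableAt u S w :=
  ⟨-1, neg_one_lt_zero, fun _ => w, rfl,
    fun t _ => by simpa [hw] using hasDerivWithinAt_const t _ w, fun _ _ => hwS⟩

lemma of_mem_Ioi (hα : IsGradientDescentOn u α (Ici a)) (hαS : MapsTo α (Ici a) S) {t : ℝ}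
    (ht : t ∈ Ioi a) : BackwardViableAt u S (α t) := by
  have hshift : MapsTo (· + t) (Icc (a - t) 0) (Ici a) := fun s hs => sub_le_iff_le_add.1 hs.1
  exact ⟨a - t, sub_neg.2 ht, fun s => α (s + t), by simp, hα.comp_add_const hshift,
    hαS.comp hshift⟩

lemma eventually_of_mem_image (hα : IsGradientDescentOn u α (Ici a)) (hαS : MapsTo α (Ici a) S)
    (hz₀ : gradient u z₀ = 0) :
    ∀ᶠ w in 𝓝 z₀, w ∈ α '' Ici a → BackwardViableAt u S w := by
  by_cases hstart : α a = z₀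
  · refine .of_forall fun w ⟨t, ht, hw⟩ => ?_
    subst hw
    rcases (mem_Ici.1 ht).eq_or_lt with rfl | hat
    · exact of_gradient_eq_zero (by rwa [hstart]) (hαS self_mem_Ici)
    · exact of_mem_Ioi hα hαS hat
  · filter_upwards [isOpen_ne.mem_nhds (Ne.symm hstart)] with w hne ⟨t, ht, hw⟩
    subst hw
    exact of_mem_Ioi hα hαS ((mem_Ici.1 ht).lt_of_ne fun h => hne (congrArg α h.symm))

lemma eventually_of_mem_union_image (hα : IsGradientDescentOn u α (Ici a))
    (hβ : IsGradientDescentOn u β (Ici b)) (hαS : MapsTo α (Ici a) S) (hβS : MapsTo β (Ici b) S)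
    (hz₀ : gradient u z₀ = 0)
    (hS : ∀ᶠ w in 𝓝 z₀, w ∈ S → w ∈ α '' Ici a ∪ β '' Ici b ∪ {z₀}) :
    ∀ᶠ w in 𝓝 z₀, w ∈ S → BackwardViableAt u S w := by
  filter_upwards [hS, eventually_of_mem_image hα hαS hz₀, eventually_of_mem_image hβ hβS hz₀]
    with w hS hwα hwβ hwS
  rcases hS hwS with (hw | hw) | rfl
  · exact hwα hw
  · exact hwβ hw
  · exact of_gradient_eq_zero hz₀ hwS

end BackwardViableAt

lemma IsGradientDescentOn.mapsTo_inter_ball (hγ : IsGradientDescentOn u γ (Icc 0 b))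
    (hK : IsOpen K) (hu : ∀ z ∈ closedBall z₀ ρ, ContDiffAt ℝ 2 u z)
    (hκ : ∀ z ∈ K ∩ ball z₀ ρ, κ ≤ u z)
    (hviable : ∀ w ∈ frontier K ∩ ball z₀ ρ, BackwardViableAt u (frontier K) w)
    (hsphere : ∀ q ∈ sphere z₀ ρ, ¬ DescendsAbove u κ (γ 0) q) (h0 : γ 0 ∈ K ∩ ball z₀ ρ) :
    MapsTo γ (Icc 0 b) (K ∩ ball z₀ ρ) := by
  by_contra hexit
  obtain ⟨t, ht, hfront, hbefore⟩ := exists_first_exit (hK.inter isOpen_ball) hγ.continuousOn h0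
    (by simpa only [MapsTo, not_forall, exists_prop] using hexit)
  have hγt : IsGradientDescentOn u γ (Icc 0 t) := hγ.mono (Icc_subset_Icc_right ht.2)
  have hclosure : MapsTo γ (Icc 0 t) (closure (K ∩ ball z₀ ρ)) := fun s hs => by
    rcases hs.2.eq_or_lt with rfl | hst
    · exact frontier_subset_closure hfront
    · exact subset_closure (hbefore s ⟨hs.1, hst⟩)
  have hball : closure (K ∩ ball z₀ ρ) ⊆ closedBall z₀ ρ :=
    (closure_mono inter_subset_right).trans closure_ball_subset_closedBall
  have hut : ∀ s ∈ Icc 0 t, ContDiffAt ℝ 2 u (γ s) := fun s hs => hu _ (hball (hclosure hs))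
  have htI : t ∈ Icc 0 t := right_mem_Icc.2 ht.1.le
  by_cases htρ : γ t ∈ ball z₀ ρ
  · have htK : γ t ∈ frontier K := hK.frontier_eq ▸ ⟨closure_mono inter_subset_left (hclosure htI),
      fun h => ((hK.inter isOpen_ball).frontier_eq ▸ hfront).2 ⟨h, htρ⟩⟩
    obtain ⟨l, hl, hlK⟩ :=
      (hviable _ ⟨htK, htρ⟩).exists_mem_of_trajectory hγt ht.1 (hut t htI)
    exact (hK.frontier_eq ▸ hlK).2 (hbefore l hl).1
  · have htsphere : γ t ∈ sphere z₀ ρ :=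
      (hball (hclosure htI)).antisymm (not_lt.1 htρ)
    refine hsphere _ htsphere ⟨t, ht.1.le, γ, rfl, rfl, hγt,
      fun s hs => (hut s hs).differentiableAt two_ne_zero, fun s hs => ?_⟩
    exact continuousWithinAt_const.closure_le (hclosure hs)
      (hut s hs).continuousAt.continuousWithinAt hκ

end Trapping

section SectorStability

variable {E : Type*} [NormedAddCommGroup E] [InnerProductSpace ℝ E] [CompleteSpace E]
  {u : E → ℝ} {z₀ : E} {ε : ℝ} {K : Set E}

lemma exists_trapping_radius (hE : Module.finrank ℝ E = 2) (hu : AnalyticAt ℝ u z₀)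
    (hK : IsOpen K) (hge : ∀ᶠ z in 𝓝 z₀, z ∈ K → u z₀ ≤ u z)
    (hviable : ∀ᶠ w in 𝓝 z₀, w ∈ frontier K → BackwardViableAt u (frontier K) w) (hε : 0 < ε) :
    ∃ ρ ∈ Ioo 0 ε, (∀ q ∈ closedBall z₀ ρ, AnalyticAt ℝ u q) ∧
      {q ∈ closedBall z₀ ρ | ¬ LojasiewiczAt u q}.Countable ∧
      ∀ᶠ z in 𝓝 z₀, z ∈ K → ∀ (γ : ℝ → E) (b : ℝ), γ 0 = z →
        IsGradientDescentOn u γ (Icc 0 b) → MapsTo γ (Icc 0 b) (K ∩ ball z₀ ρ) := by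
  have : FiniteDimensional ℝ E := .of_finrank_pos (hE ▸ two_pos)
  obtain ⟨r, hr, hcount⟩ := exists_countable_setOf_not_lojasiewiczAt hE hu
  obtain ⟨R, hR, hnear⟩ := Metric.eventually_nhds_iff_ball.1
    (hu.eventually_analyticAt.and (hge.and hviable))
  obtain ⟨ρ, ⟨hρ, hρlt⟩, hdisj⟩ :=
    exists_sphere_disjoint_of_countable hcount z₀ (lt_min hε (lt_min hr hR))
  obtain ⟨hρε, hρr, hρR⟩ : ρ < ε ∧ ρ < r ∧ ρ < R := by simpa only [lt_min_iff] using hρlt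
  have hnear' := fun q (hq : q ∈ closedBall z₀ ρ) => hnear q (closedBall_subset_ball hρR hq)
  have hsphere : ∀ᶠ z in 𝓝 z₀, ∀ q ∈ sphere z₀ ρ, ¬ DescendsAbove u (u z₀) z q := by
    refine eventually_forall_not_descendsAbove (isCompact_sphere z₀ ρ) (by simpa using hρ.ne)
      hu.continuousAt (fun q hq => ?_) fun q hq => ?_
    · exact (hnear' q (sphere_subset_closedBall hq)).1.eventually_analyticAt.mono
        fun z hz => hz.differentiableAt
    · by_contra hbad
      exact disjoint_left.1 hdisj hq
        ⟨closedBall_subset_ball hρr (sphere_subset_closedBall hq), hbad⟩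
  refine ⟨ρ, ⟨hρ, hρε⟩, fun q hq => (hnear' q hq).1,
    hcount.mono (inter_subset_inter_left _ (closedBall_subset_ball hρr)), ?_⟩
  filter_upwards [hsphere, ball_mem_nhds z₀ hρ] with z hz hzρ hzK γ b hγ0 hγ
  subst hγ0
  exact hγ.mapsTo_inter_ball hK (fun q hq => (hnear' q hq).1.contDiffAt)
    (fun q hq => (hnear' q (ball_subset_closedBall hq.2)).2.1 hq.1)
    (fun q hq => (hnear' q (ball_subset_closedBall hq.2)).2.2 hq.1) hz ⟨hzK, hzρ⟩

theorem sector_stability_of_critical_point_general (hE : Module.finrank ℝ E = 2)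
    (hu : AnalyticAt ℝ u z₀) (hK : IsOpen K) (hge : ∀ᶠ z in 𝓝 z₀, z ∈ K → u z₀ ≤ u z)
    (hviable : ∀ᶠ w in 𝓝 z₀, w ∈ frontier K → BackwardViableAt u (frontier K) w) (hε : 0 < ε) :
    ∃ δ > 0,
      (∀ (T : ℝ) (γ : ℝ → E), γ 0 ∈ K ∩ ball z₀ δ → IsGradientDescentOn u γ (Ico 0 T) →
        ∀ t ∈ Ico 0 T, γ t ∈ K ∧ dist (γ t) z₀ < ε) ∧
      (∀ γ : ℝ → E, γ 0 ∈ K ∩ ball z₀ δ → IsGradientDescentOn u γ (Ici 0) →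
        (∀ t ∈ Ici (0 : ℝ), γ t ∈ K ∧ dist (γ t) z₀ < ε) ∧
          ∃ q ∈ closure K, dist q z₀ ≤ ε ∧ Tendsto γ atTop (𝓝 q)) := by
  have : FiniteDimensional ℝ E := .of_finrank_pos (hE ▸ two_pos)
  obtain ⟨ρ, hρ, hana, hcount, htrap⟩ := exists_trapping_radius hE hu hK hge hviable hε
  obtain ⟨δ, hδ, htrap⟩ := Metric.eventually_nhds_iff_ball.1 htrap
  refine ⟨δ, hδ, fun T γ h0 hγ t ht => ?_, fun γ h0 hγ => ?_⟩
  · have hin := htrap _ h0.2 h0.1 γ t rfl (hγ.mono (Icc_subset_Ico_right ht.2))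
      (right_mem_Icc.2 ht.1)
    exact ⟨hin.1, hin.2.trans hρ.2⟩
  · have hin : MapsTo γ (Ici 0) (K ∩ ball z₀ ρ) := fun t ht =>
      htrap _ h0.2 h0.1 γ t rfl (hγ.mono Icc_subset_Ici_self) (right_mem_Icc.2 ht)
    obtain ⟨q, hq⟩ := hγ.exists_tendsto_of_mapsTo_isCompact (isCompact_closedBall z₀ ρ)
      (hin.mono_right fun w hw => ball_subset_closedBall hw.2)
      (fun p hp => (hana p hp).eventually_analyticAt.mono fun w hw => hw.differentiableAt) hcount
    have hevent : ∀ᶠ t in atTop, γ t ∈ K ∩ ball z₀ ρ := (eventually_ge_atTop 0).mono hin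
    refine ⟨fun t ht => ⟨(hin ht).1, (hin ht).2.trans hρ.2⟩, q,
      mem_closure_of_tendsto hq (hevent.mono fun t ht => ht.1),
      le_of_tendsto (hq.dist tendsto_const_nhds) (hevent.mono fun t ht => ?_), hq⟩
    exact (ht.2.trans hρ.2).le

end SectorStability

/-- Stability of a critical point of a real-analytic function from within a curvilinear
sector `K` bounded by two gradient-descent trajectories converging to the critical point,
on which `u` is bounded below by its critical value. -/
theorem sector_stability_of_critical_point
    (U : Set E2) (hUo : IsOpen U)
    (u : E2 → ℝ) (hu : AnalyticOnNhd ℝ u U)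
    (z₀ : E2) (hz₀ : z₀ ∈ U) (hcrit : gradient u z₀ = 0)
    (σ : ℝ) (hσ : 0 < σ) (hball : closedBall z₀ σ ⊆ U)
    (K : Set E2) (hKo : IsOpen K) (hKge : ∀ z ∈ K, u z₀ ≤ u z)
    (γ₁ γ₂ : ℝ → E2)
    (hd₁ : ∀ t ∈ Ici (0:ℝ), HasDerivWithinAt γ₁ (-(gradient u (γ₁ t))) (Ici 0) t)
    (hd₂ : ∀ t ∈ Ici (0:ℝ), HasDerivWithinAt γ₂ (-(gradient u (γ₂ t))) (Ici 0) t)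
    (hlim₁ : Tendsto γ₁ atTop (𝓝 z₀)) (hlim₂ : Tendsto γ₂ atTop (𝓝 z₀))
    (hsub₁ : γ₁ '' Ici 0 ⊆ frontier K) (hsub₂ : γ₂ '' Ici 0 ⊆ frontier K)
    (hfr : frontier K ∩ ball z₀ σ ⊆ γ₁ '' Ici 0 ∪ γ₂ '' Ici 0 ∪ {z₀}) :
    ∀ ε, 0 < ε → ε ≤ σ →
      ∃ δ > 0,
        (∀ T : ℝ, 0 < T → ∀ z ∈ K ∩ ball z₀ δ, ∀ γ : ℝ → E2, γ 0 = z →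
          (∀ t ∈ Ico (0:ℝ) T, HasDerivWithinAt γ (-(gradient u (γ t))) (Ico 0 T) t) →
          ∀ t ∈ Ico (0:ℝ) T, γ t ∈ K ∧ dist (γ t) z₀ < ε) ∧
        (∀ z ∈ K ∩ ball z₀ δ, ∀ γ : ℝ → E2, γ 0 = z →
          (∀ t ∈ Ici (0:ℝ), HasDerivWithinAt γ (-(gradient u (γ t))) (Ici 0) t) →
          (∀ t ∈ Ici (0:ℝ), γ t ∈ K ∧ dist (γ t) z₀ < ε) ∧
            ∃ zlim ∈ closure K, dist zlim z₀ ≤ ε ∧ Tendsto γ atTop (𝓝 zlim)) := by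
  intro ε hε _
  have hviable := BackwardViableAt.eventually_of_mem_union_image hd₁ hd₂
    (mapsTo_iff_image_subset.2 hsub₁) (mapsTo_iff_image_subset.2 hsub₂) hcrit
    ((eventually_mem_set.2 (ball_mem_nhds z₀ hσ)).mono fun w hwσ hw => hfr ⟨hw, hwσ⟩)
  obtain ⟨δ, hδ, hfin, hinf⟩ := sector_stability_of_critical_point_general (by simp)
    (hu z₀ hz₀) hKo (.of_forall hKge) hviable hε
  exact ⟨δ, hδ, fun T _ z hz γ h0 => hfin T γ (h0 ▸ hz), fun z hz γ h0 => hinf γ (h0 ▸ hz)⟩
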